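/- Let w*_χ(μ0) denote the infimum χ-PBE sender payoff. Then lim_{χ↗1} w*_χ(μ0) = ŵ(μ0). In particular, lim_{χ↗1} w*_χ(μ0) = v̂(μ0) if and only if ŵ(μ0) = v̂(μ0). -/

import Mathlib

open MeasureTheory Filter Topology

/-- A probability vector on a finite set. -/
def IsDist {X : Type*} [Fintype X] (f : X → ℝ) : Prop :=
  (∀ x, 0 ≤ f x) ∧ ∑ x, f x = 1

/-- An experiment (official reporting protocol): a state-contingent distribution over
messages. -/
def IsExperiment {Θ M : Type*} [Fintype M] (ψ : Θ → M → ℝ) : Prop :=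
  ∀ θ, IsDist (ψ θ)

/-- The receiver's best responses `A*_R(μ)` to a belief vector `μ` on a finite state
space. -/
def BRf {A Θ : Type*} [Fintype Θ] (uR : A → Θ → ℝ) (μ : Θ → ℝ) : Set A :=
  {a | ∀ a' : A, ∑ θ, uR a' θ * μ θ ≤ ∑ θ, uR a θ * μ θ}

/-- The belief simplex `ΔΘ` over a finite state space, viewed as a subspace of `ℝ^Θ`. -/
abbrev Belief (Θ : Type*) [Fintype Θ] : Type _ := {f : Θ → ℝ // f ∈ stdSimplex ℝ Θ}

/-- The sender's upper value function `v(μ) = max_{a ∈ A*_R(μ)} u_S(a)` (state-independent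
sender utility). -/
noncomputable def vG {A Θ : Type*} [Fintype Θ] (uS : A → ℝ) (uR : A → Θ → ℝ)
    (μ : Θ → ℝ) : ℝ :=
  sSup (uS '' BRf uR μ)

/-- The sender's lower value function `w(μ) = min_{a ∈ A*_R(μ)} u_S(a)`. -/
noncomputable def wG {A Θ : Type*} [Fintype Θ] (uS : A → ℝ) (uR : A → Θ → ℝ)
    (μ : Θ → ℝ) : ℝ :=
  sInf (uS '' BRf uR μ)

/-- The set `I(μ0)` of information policies: Borel probability measures on the belief
simplex whose barycenter is the prior `μ0`. -/
def IPolF {Θ : Type*} [Fintype Θ] (μ0 : Θ → ℝ) : Set (ProbabilityMeasure (Belief Θ)) :=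
  {p | ∀ θ : Θ, ∫ μ, (μ : Belief Θ).1 θ ∂(p : Measure (Belief Θ)) = μ0 θ}

/-- `v̂(μ0)`: the sender's Bayesian persuasion value. -/
noncomputable def vHatG {A Θ : Type*} [Fintype Θ] (uS : A → ℝ) (uR : A → Θ → ℝ)
    (μ0 : Θ → ℝ) : ℝ :=
  sSup ((fun p : ProbabilityMeasure (Belief Θ) =>
    ∫ μ, vG uS uR (μ : Belief Θ).1 ∂(p : Measure (Belief Θ))) '' IPolF μ0)

/-- `ŵ(μ0)`: the sender's worst equilibrium value under full commitment. -/
noncomputable def wHatG {A Θ : Type*} [Fintype Θ] (uS : A → ℝ) (uR : A → Θ → ℝ)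
    (μ0 : Θ → ℝ) : ℝ :=
  sSup ((fun p : ProbabilityMeasure (Belief Θ) =>
    ∫ μ, wG uS uR (μ : Belief Θ).1 ∂(p : Measure (Belief Θ))) '' IPolF μ0)

/-- The sender's expected payoff in the partial-credibility game from (provisionally)
choosing experiment `ψ'`, given influencing strategy `σ` and receiver strategy `α`. -/
noncomputable def chiValue {A Θ M : Type*} [Fintype A] [Fintype Θ] [Fintype M]
    (uS : A → ℝ) (μ0 : Θ → ℝ) (χ : ℝ)
    (σ : Θ → (Θ → M → ℝ) → M → ℝ) (α : M → (Θ → M → ℝ) → A → ℝ)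
    (ψ' : Θ → M → ℝ) : ℝ :=
  ∑ θ, μ0 θ * ∑ m, (χ * ψ' θ m + (1 - χ) * σ θ ψ' m) * ∑ a, uS a * α m ψ' a

/-- Perfect Bayesian `χ`-equilibrium of the partial-credibility persuasion game. -/
def IsChiPBE {A Θ M : Type*} [Fintype A] [Fintype Θ] [Fintype M]
    (uS : A → ℝ) (uR : A → Θ → ℝ) (μ0 : Θ → ℝ) (χ : ℝ)
    (ψ : Θ → M → ℝ) (σ : Θ → (Θ → M → ℝ) → M → ℝ)
    (α : M → (Θ → M → ℝ) → A → ℝ) (β : M → (Θ → M → ℝ) → Θ → ℝ) : Prop :=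
  IsExperiment ψ ∧
  (∀ ψ' : Θ → M → ℝ, IsExperiment ψ' → ∀ θ, IsDist (σ θ ψ')) ∧
  (∀ ψ' : Θ → M → ℝ, IsExperiment ψ' → ∀ m, IsDist (α m ψ')) ∧
  (∀ ψ' : Θ → M → ℝ, IsExperiment ψ' → ∀ m, IsDist (β m ψ')) ∧
  -- (1) the sender's experiment choice is optimal
  (∀ ψ' : Θ → M → ℝ, IsExperiment ψ' →
    chiValue uS μ0 χ σ α ψ' ≤ chiValue uS μ0 χ σ α ψ) ∧
  -- (2) the receiver best responds to his beliefs
  (∀ ψ' : Θ → M → ℝ, IsExperiment ψ' → ∀ (m : M) (a : A),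
    α m ψ' a ≠ 0 → a ∈ BRf uR (β m ψ')) ∧
  -- (3) beliefs are Bayesian
  (∀ ψ' : Θ → M → ℝ, IsExperiment ψ' → ∀ (m : M) (θ : Θ),
    β m ψ' θ * (∑ θ', μ0 θ' * (χ * ψ' θ' m + (1 - χ) * σ θ' ψ' m)) =
      μ0 θ * (χ * ψ' θ m + (1 - χ) * σ θ ψ' m)) ∧
  -- (4) the influencing sender's message choice is optimal
  (∀ ψ' : Θ → M → ℝ, IsExperiment ψ' → ∀ (θ : Θ) (m : M), σ θ ψ' m ≠ 0 →
    ∀ m' : M, ∑ a, uS a * α m' ψ' a ≤ ∑ a, uS a * α m ψ' a)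

/-- The set of sender `χ`-PBE payoffs. -/
def chiPBEPayoffs (A : Type*) {Θ : Type*} (M : Type*) [Fintype A] [Fintype Θ] [Fintype M]
    (uS : A → ℝ) (uR : A → Θ → ℝ) (μ0 : Θ → ℝ) (χ : ℝ) : Set ℝ :=
  {s | ∃ (ψ : Θ → M → ℝ) (σ : Θ → (Θ → M → ℝ) → M → ℝ)
      (α : M → (Θ → M → ℝ) → A → ℝ) (β : M → (Θ → M → ℝ) → Θ → ℝ),
    IsChiPBE uS uR μ0 χ ψ σ α β ∧ s = chiValue uS μ0 χ σ α ψ}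

/-- `w*_χ(μ0)`: the infimum sender `χ`-PBE payoff. -/
noncomputable def wStar (A : Type*) {Θ : Type*} (M : Type*)
    [Fintype A] [Fintype Θ] [Fintype M]
    (uS : A → ℝ) (uR : A → Θ → ℝ) (μ0 : Θ → ℝ) (χ : ℝ) : ℝ :=
  sInf (chiPBEPayoffs A M uS uR μ0 χ)


section helpers

variable {A Θ M : Type} [Fintype A] [Fintype Θ] [Fintype M]

theorem BRf_nonempty [Nonempty A] (uR : A → Θ → ℝ) (x : Θ → ℝ) : (BRf uR x).Nonempty := by
  obtain ⟨a, ha⟩ := Finite.exists_max (fun a => ∑ θ, uR a θ * x θ)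
  exact ⟨a, ha⟩

theorem wG_le (uS : A → ℝ) (uR : A → Θ → ℝ) (x : Θ → ℝ) {a : A} (ha : a ∈ BRf uR x) :
    wG uS uR x ≤ uS a :=
  csInf_le (Set.toFinite _).bddBelow ⟨a, ha, rfl⟩

theorem wG_attained [Nonempty A] (uS : A → ℝ) (uR : A → Θ → ℝ) (x : Θ → ℝ) :
    ∃ a ∈ BRf uR x, uS a = wG uS uR x :=
  ((BRf_nonempty uR x).image uS).csInf_mem (Set.toFinite _)

theorem wG_anti [Nonempty A] (uS : A → ℝ) (uR : A → Θ → ℝ) {x y : Θ → ℝ}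
    (h : BRf uR y ⊆ BRf uR x) : wG uS uR x ≤ wG uS uR y := by
  obtain ⟨a, ha, h2⟩ := wG_attained uS uR y
  rw [← h2]
  exact wG_le uS uR x (h ha)

/-- A crude bound on the sender's utility. -/
noncomputable def KB (uS : A → ℝ) : ℝ := ∑ a, |uS a|

theorem KB_nonneg (uS : A → ℝ) : 0 ≤ KB uS := Finset.sum_nonneg fun _ _ => abs_nonneg _

theorem abs_uS_le (uS : A → ℝ) (a : A) : |uS a| ≤ KB uS :=
  Finset.single_le_sum (f := fun a => |uS a|) (fun _ _ => abs_nonneg _) (Finset.mem_univ a)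

theorem abs_wG_le [Nonempty A] (uS : A → ℝ) (uR : A → Θ → ℝ) (x : Θ → ℝ) :
    |wG uS uR x| ≤ KB uS := by
  obtain ⟨a, ha, h2⟩ := wG_attained uS uR x
  rw [← h2]
  exact abs_uS_le uS a

theorem BRf_smul (uR : A → Θ → ℝ) (x : Θ → ℝ) {c : ℝ} (hc : 0 < c) :
    BRf uR (fun θ => c * x θ) = BRf uR x := by
  have h : ∀ a, ∑ θ, uR a θ * (c * x θ) = c * ∑ θ, uR a θ * x θ := by
    intro a
    rw [Finset.mul_sum]
    exact Finset.sum_congr rfl fun _ _ => by ring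
  ext a
  simp only [BRf, Set.mem_ofPred_eq, h]
  exact forall_congr' fun a' => mul_le_mul_iff_right₀ hc

theorem wG_smul (uS : A → ℝ) (uR : A → Θ → ℝ) (x : Θ → ℝ) {c : ℝ} (hc : 0 < c) :
    wG uS uR (fun θ => c * x θ) = wG uS uR x := by
  unfold wG
  rw [BRf_smul uR x hc]

theorem BRf_eventually (uR : A → Θ → ℝ) (x : Θ → ℝ) :
    ∀ᶠ y in 𝓝 x, BRf uR y ⊆ BRf uR x := by
  have key : ∀ a : A, ∀ᶠ y in 𝓝 x, a ∈ BRf uR y → a ∈ BRf uR x := by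
    intro a
    by_cases ha : a ∈ BRf uR x
    · exact Eventually.of_forall fun _ _ => ha
    · have ha2 := ha
      simp only [BRf, Set.mem_ofPred_eq, not_forall, not_le] at ha2
      obtain ⟨a', ha'⟩ := ha2
      have hc : ∀ b : A, Continuous fun y : Θ → ℝ => ∑ θ, uR b θ * y θ := by
        intro b; fun_prop
      filter_upwards [(isOpen_lt (hc a) (hc a')).mem_nhds ha'] with y hy hm
      exact absurd (hm a') (not_le.mpr hy)
  filter_upwards [eventually_all.mpr key] with y hy a ha
  exact hy a ha

theorem measurable_wG [Nonempty A] (uS : A → ℝ) (uR : A → Θ → ℝ) : Measurable (wG uS uR) := by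
  apply LowerSemicontinuous.measurable
  intro x c hc
  filter_upwards [BRf_eventually uR x] with y hy
  exact hc.trans_le (wG_anti uS uR hy)

theorem U_ge (uS : A → ℝ) (uR : A → Θ → ℝ) (x : Θ → ℝ) {α : A → ℝ} (hα : IsDist α)
    (h : ∀ a, α a ≠ 0 → a ∈ BRf uR x) : wG uS uR x ≤ ∑ a, uS a * α a := by
  calc wG uS uR x = ∑ a, wG uS uR x * α a := by rw [← Finset.mul_sum, hα.2, mul_one]
    _ ≤ _ := by
      apply Finset.sum_le_sum
      intro a _
      by_cases h0 : α a = 0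
      · simp [h0]
      · exact mul_le_mul_of_nonneg_right (wG_le uS uR x (h a h0)) (hα.1 a)

theorem U_abs (uS : A → ℝ) {α : A → ℝ} (hα : IsDist α) : |∑ a, uS a * α a| ≤ KB uS := by
  calc |∑ a, uS a * α a| ≤ ∑ a, |uS a * α a| := Finset.abs_sum_le_sum_abs _ _
    _ ≤ ∑ a, KB uS * α a := by
      apply Finset.sum_le_sum
      intro a _
      rw [abs_mul, abs_of_nonneg (hα.1 a)]
      exact mul_le_mul_of_nonneg_right (abs_uS_le uS a) (hα.1 a)
    _ = KB uS := by rw [← Finset.mul_sum, hα.2, mul_one]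

/-- Mixing two best responses yields any intermediate utility. -/
theorem exists_mix (uS : A → ℝ) (uR : A → Θ → ℝ) (x : Θ → ℝ) {a b : A} {s : ℝ}
    (ha : a ∈ BRf uR x) (hb : b ∈ BRf uR x) (h1 : uS a ≤ s) (h2 : s ≤ uS b) :
    ∃ α : A → ℝ, IsDist α ∧ (∀ c, α c ≠ 0 → c ∈ BRf uR x) ∧ ∑ c, uS c * α c = s := by
  classical
  have hs : s ∈ segment ℝ (uS a) (uS b) := by
    rw [segment_eq_Icc (h1.trans h2)]; exact ⟨h1, h2⟩
  obtain ⟨p, q, hp, hq, hpq, hs⟩ := hs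
  refine ⟨fun c => p * (if c = a then 1 else 0) + q * (if c = b then 1 else 0), ⟨?_, ?_⟩, ?_, ?_⟩
  · intro c
    dsimp only
    positivity
  · simp [Finset.sum_add_distrib, hpq]
  · intro c hc
    by_contra hcn
    apply hc
    have h3 : c ≠ a := fun h => hcn (h ▸ ha)
    have h4 : c ≠ b := fun h => hcn (h ▸ hb)
    simp [h3, h4]
  · simp only [mul_add, Finset.sum_add_distrib]
    simp at hs
    simp
    linarith

/-- Potential argument. -/
theorem potential [Nonempty M] (f : M → ℝ → ℝ) (K : ℝ) (hmeas : ∀ m, Measurable (f m))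
    (hK : ∀ m t, |f m t| ≤ K) (hloc : ∀ m t, ∀ᶠ u in 𝓝 t, f m t ≤ f m u) :
    ∃ t ∈ stdSimplex ℝ M, ∀ m, 0 < t m → ∀ m', ∀ δ > 0, ∃ τ, 0 ≤ τ ∧ τ ≤ 1 ∧ |τ - t m| < δ ∧
      f m' (t m') ≤ f m τ := by
  classical
  have hint : ∀ m a b, IntervalIntegrable (f m) volume a b := by
    intro m a b
    apply (intervalIntegrable_const (c := K)).mono_fun (hmeas m).aestronglyMeasurable
    refine Eventually.of_forall fun u => ?_
    simp only [Real.norm_eq_abs]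
    exact (hK m u).trans (le_abs_self K)
  have hcont : Continuous fun t : M → ℝ => ∑ m, ∫ u in (0:ℝ)..(t m), f m u := by
    refine continuous_finsetSum _ fun m _ => ?_
    exact (intervalIntegral.continuous_primitive (hint m) 0).comp (continuous_apply m)
  have hne : (stdSimplex ℝ M).Nonempty :=
    ⟨_, single_mem_stdSimplex ℝ (Classical.arbitrary M)⟩
  obtain ⟨t, ht, hmax⟩ := (isCompact_stdSimplex ℝ M).exists_isMaxOn hne hcont.continuousOn
  refine ⟨t, ht, ?_⟩
  intro m hm m' δ hδ
  have htle : ∀ k, t k ≤ 1 := fun k => by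
    rw [← ht.2]; exact Finset.single_le_sum (fun i _ => ht.1 i) (Finset.mem_univ k)
  by_cases hmm : m' = m
  · subst hmm
    exact ⟨t m', ht.1 _, htle _, by simpa using hδ, le_rfl⟩
  by_contra hcon
  push Not at hcon
  obtain ⟨η, hη, hloc'⟩ := Metric.eventually_nhds_iff.mp (hloc m' (t m'))
  set c := f m' (t m') with hcdef
  obtain ⟨h, hpos, hh⟩ : ∃ h, 0 < h ∧ h < min (min δ (t m)) η := exists_between (by positivity)
  have h1 : h < δ := hh.trans_le ((min_le_left _ _).trans (min_le_left _ _))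
  have h2 : h < t m := hh.trans_le ((min_le_left _ _).trans (min_le_right _ _))
  have h3 : h < η := hh.trans_le (min_le_right _ _)
  -- the perturbed point
  let t' : M → ℝ := Function.update (Function.update t m (t m - h)) m' (t m' + h)
  have e1 : t' m' = t m' + h := by simp [t']
  have e2 : t' m = t m - h := by simp [t', Ne.symm hmm]
  have e3 : ∀ k, k ≠ m → k ≠ m' → t' k = t k := by
    intro k hk hk'; simp [t', hk, hk']
  have hsplit : ∀ g : M → ℝ, ∑ k, g k = g m + (g m' + ∑ k ∈ (Finset.univ.erase m).erase m', g k) := by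
    intro g
    rw [Finset.add_sum_erase _ g (by simp [hmm]), Finset.add_sum_erase _ g (Finset.mem_univ m)]
  have hrest : ∀ g : M → ℝ → ℝ, ∑ k ∈ (Finset.univ.erase m).erase m', g k (t' k) =
      ∑ k ∈ (Finset.univ.erase m).erase m', g k (t k) := by
    intro g
    refine Finset.sum_congr rfl fun k hk => ?_
    simp only [Finset.mem_erase] at hk
    rw [e3 k hk.2.1 hk.1]
  have ht' : t' ∈ stdSimplex ℝ M := by
    refine ⟨?_, ?_⟩
    · intro k
      by_cases hk' : k = m'
      · subst hk'; rw [e1]; linarith [ht.1 k]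
      by_cases hk : k = m
      · subst hk; rw [e2]; linarith
      · rw [e3 k hk hk']; exact ht.1 k
    · have := ht.2
      rw [hsplit] at this ⊢
      rw [hrest (fun _ x => x), e1, e2]
      linarith
  have hle := hmax ht'
  simp only [Set.mem_ofPred_eq] at hle
  rw [hsplit, hsplit (fun k => ∫ u in (0:ℝ)..(t k), f k u),
    hrest (fun k x => ∫ u in (0:ℝ)..x, f k u), e1, e2] at hle
  have i1 := intervalIntegral.integral_interval_sub_left (hint m' 0 (t m' + h)) (hint m' 0 (t m'))
  have i2 := intervalIntegral.integral_interval_sub_left (hint m 0 (t m)) (hint m 0 (t m - h))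
  have i3 : h * c ≤ ∫ u in (t m')..(t m' + h), f m' u := by
    have := intervalIntegral.integral_mono_on (a := t m') (b := t m' + h) (f := fun _ => c)
      (g := f m') (by linarith) intervalIntegrable_const (hint _ _ _) (by
        intro u hu
        apply hloc'
        rw [Real.dist_eq, abs_lt]
        constructor <;> linarith [hu.1, hu.2])
    simpa using this
  have i4 : 0 < ∫ u in (t m - h)..(t m), (c - f m u) := by
    apply intervalIntegral.intervalIntegral_pos_of_pos_on
    · exact intervalIntegrable_const.sub (hint _ _ _)
    · intro u hu
      have := hcon u (by linarith [hu.1]) (by linarith [hu.2, htle m]) (by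
        rw [abs_lt]; constructor <;> linarith [hu.1, hu.2])
      linarith
    · linarith
  rw [intervalIntegral.integral_sub intervalIntegrable_const (hint _ _ _)] at i4
  simp at i4
  linarith

end helpers


section measures

variable {A Θ M : Type} [Fintype A] [Fintype Θ] [Fintype M]

theorem integral_wG_abs [Nonempty A] (uS : A → ℝ) (uR : A → Θ → ℝ)
    (p : ProbabilityMeasure (Belief Θ)) :
    |∫ μ, wG uS uR (μ : Belief Θ).1 ∂(p : Measure (Belief Θ))| ≤ KB uS := by
  have := norm_integral_le_of_norm_le_const (μ := (p : Measure (Belief Θ)))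
    (f := fun μ : Belief Θ => wG uS uR μ.1) (C := KB uS)
    (Eventually.of_forall fun μ => by simpa using abs_wG_le uS uR μ.1)
  simpa using this

theorem wHat_bdd [Nonempty A] (uS : A → ℝ) (uR : A → Θ → ℝ) (μ0 : Θ → ℝ) :
    BddAbove ((fun p : ProbabilityMeasure (Belief Θ) =>
    ∫ μ, wG uS uR (μ : Belief Θ).1 ∂(p : Measure (Belief Θ))) '' IPolF μ0) := by
  refine ⟨KB uS, ?_⟩
  rintro _ ⟨p, _, rfl⟩
  exact (abs_le.mp (integral_wG_abs uS uR p)).2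

/-- Finite decompositions of the prior give information policies. -/
theorem finite_policy (μ0 : Θ → ℝ) (hμ0 : μ0 ∈ stdSimplex ℝ Θ)
    {ι : Type} [Fintype ι] (y : ι → Θ → ℝ) (hy : ∀ i θ, 0 ≤ y i θ)
    {κ : ℝ} (hκ : 0 < κ) (hsum : ∀ θ, ∑ i, y i θ = κ * μ0 θ) :
    ∃ p ∈ IPolF μ0, ∀ g : (Θ → ℝ) → ℝ, (∀ (c : ℝ) (x : Θ → ℝ), 0 < c → g (fun θ => c * x θ) = g x) →
      κ * ∫ μ, g (μ : Belief Θ).1 ∂(p : Measure (Belief Θ)) = ∑ i, (∑ θ, y i θ) * g (y i) := by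
  classical
  let n : ι → ℝ := fun i => ∑ θ, y i θ
  have hn : ∀ i, 0 ≤ n i := fun i => Finset.sum_nonneg fun θ _ => hy i θ
  have hb : ∀ i, ∃ b : Belief Θ, ∀ θ, n i * b.1 θ = y i θ := by
    intro i
    rcases (hn i).eq_or_lt with h | h
    · refine ⟨⟨μ0, hμ0⟩, fun θ => ?_⟩
      have := (Finset.sum_eq_zero_iff_of_nonneg (fun θ _ => hy i θ)).mp h.symm θ (Finset.mem_univ θ)
      rw [← h, this]; simp
    · refine ⟨⟨fun θ => (n i)⁻¹ * y i θ, fun θ => mul_nonneg (inv_nonneg.mpr h.le) (hy i θ), ?_⟩, ?_⟩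
      · rw [← Finset.mul_sum]; exact inv_mul_cancel₀ h.ne'
      · intro θ
        dsimp only
        rw [← mul_assoc, mul_inv_cancel₀ h.ne', one_mul]
  choose b hb using hb
  have htot : ∑ i, n i = κ := by
    simp only [n]
    rw [Finset.sum_comm]
    simp only [hsum]
    rw [← Finset.mul_sum, hμ0.2, mul_one]
  let P : Measure (Belief Θ) := ∑ i, ENNReal.ofReal (κ⁻¹ * n i) • Measure.dirac (b i)
  have hw : ∀ i, 0 ≤ κ⁻¹ * n i := fun i => mul_nonneg (inv_nonneg.mpr hκ.le) (hn i)
  have hP : IsProbabilityMeasure P := by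
    constructor
    simp only [P, Measure.coe_finsetSum, Finset.sum_apply, Measure.smul_apply, measure_univ,
      smul_eq_mul, mul_one]
    rw [← ENNReal.ofReal_sum_of_nonneg (fun i _ => hw i), ← Finset.mul_sum, htot,
      inv_mul_cancel₀ hκ.ne', ENNReal.ofReal_one]
  have hint : ∀ g : Belief Θ → ℝ, ∫ μ, g μ ∂P = ∑ i, κ⁻¹ * n i * g (b i) := by
    intro g
    have hg : ∀ i ∈ (Finset.univ : Finset ι),
        Integrable g (ENNReal.ofReal (κ⁻¹ * n i) • Measure.dirac (b i)) := by
      intro i _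
      exact (integrable_dirac (by simp)).smul_measure ENNReal.ofReal_ne_top
    simp only [P]
    rw [integral_finsetSum_measure hg]
    refine Finset.sum_congr rfl fun i _ => ?_
    rw [integral_smul_measure, integral_dirac, ENNReal.toReal_ofReal (hw i), smul_eq_mul]
  refine ⟨⟨P, hP⟩, ?_, ?_⟩
  · intro θ
    change ∫ μ : Belief Θ, μ.1 θ ∂P = μ0 θ
    rw [hint]
    simp only [mul_assoc, hb]
    rw [← Finset.mul_sum, hsum, ← mul_assoc, inv_mul_cancel₀ hκ.ne', one_mul]
  · intro g hg
    change κ * ∫ μ : Belief Θ, g μ.1 ∂P = _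
    rw [hint, Finset.mul_sum]
    refine Finset.sum_congr rfl fun i _ => ?_
    rw [← mul_assoc, ← mul_assoc, mul_inv_cancel₀ hκ.ne', one_mul]
    rcases (hn i).eq_or_lt with h | h
    · change n i * _ = n i * _
      rw [← h]; simp
    · rw [← hg (n i) (b i).1 h]
      congr 2
      funext θ; exact hb i θ

theorem le_wHat [Nonempty A] (uS : A → ℝ) (uR : A → Θ → ℝ) (μ0 : Θ → ℝ)
    (hμ0 : μ0 ∈ stdSimplex ℝ Θ)
    {ι : Type} [Fintype ι] (y : ι → Θ → ℝ) (hy : ∀ i θ, 0 ≤ y i θ)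
    {κ : ℝ} (hκ : 0 < κ) (hsum : ∀ θ, ∑ i, y i θ = κ * μ0 θ) :
    ∑ i, (∑ θ, y i θ) * wG uS uR (y i) ≤ κ * wHatG uS uR μ0 := by
  obtain ⟨p, hp, h⟩ := finite_policy μ0 hμ0 y hy hκ hsum
  rw [← h (wG uS uR) fun c x hc => wG_smul uS uR x hc]
  exact mul_le_mul_of_nonneg_left (le_csSup (wHat_bdd uS uR μ0) ⟨p, hp, rfl⟩) hκ.le

theorem IPolF_nonempty (μ0 : Θ → ℝ) (hμ0 : μ0 ∈ stdSimplex ℝ Θ) : (IPolF μ0).Nonempty := by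
  obtain ⟨p, hp, h⟩ := finite_policy (ι := Unit) μ0 hμ0 (fun _ => μ0) (fun _ => hμ0.1) one_pos
    (by simp)
  exact ⟨p, hp⟩

theorem wHat_abs [Nonempty A] (uS : A → ℝ) (uR : A → Θ → ℝ) (μ0 : Θ → ℝ)
    (hμ0 : μ0 ∈ stdSimplex ℝ Θ) : |wHatG uS uR μ0| ≤ KB uS := by
  obtain ⟨p, hp⟩ := IPolF_nonempty μ0 hμ0
  rw [abs_le]
  constructor
  · exact (abs_le.mp (integral_wG_abs uS uR p)).1.trans
      (le_csSup (wHat_bdd uS uR μ0) ⟨p, hp, rfl⟩)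
  · refine csSup_le (Set.Nonempty.image _ ⟨p, hp⟩) ?_
    rintro _ ⟨p, _, rfl⟩
    exact (abs_le.mp (integral_wG_abs uS uR p)).2

/-- Pooling beliefs with the same best responses. -/
theorem mem_hull [Nonempty A] (uS : A → ℝ) (uR : A → Θ → ℝ) (μ0 : Θ → ℝ)
    {p : ProbabilityMeasure (Belief Θ)} (hp : p ∈ IPolF μ0) :
    ((μ0, ∫ μ, wG uS uR (μ : Belief Θ).1 ∂(p : Measure (Belief Θ))) : (Θ → ℝ) × ℝ) ∈
      convexHull ℝ {z : (Θ → ℝ) × ℝ | z.1 ∈ stdSimplex ℝ Θ ∧ z.2 = wG uS uR z.1} := by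
  classical
  set P : Measure (Belief Θ) := (p : Measure (Belief Θ)) with hPdef
  let E : Set A → Set (Belief Θ) := fun S => {μ | BRf uR μ.1 = S}
  have hcoord : ∀ θ, Continuous fun μ : Belief Θ => μ.1 θ := fun θ =>
    (continuous_apply θ).comp continuous_subtype_val
  have hmem : ∀ a : A, MeasurableSet {μ : Belief Θ | a ∈ BRf uR μ.1} := by
    intro a
    have : {μ : Belief Θ | a ∈ BRf uR μ.1} =
        ⋂ a' : A, {μ : Belief Θ | ∑ θ, uR a' θ * μ.1 θ ≤ ∑ θ, uR a θ * μ.1 θ} := by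
      ext μ; simp [BRf]
    rw [this]
    refine (isClosed_iInter fun a' => isClosed_le ?_ ?_).measurableSet <;>
      exact continuous_finsetSum _ fun θ _ => continuous_const.mul (hcoord θ)
  have hE : ∀ S, MeasurableSet (E S) := by
    intro S
    have : E S = ⋂ a : A, {μ : Belief Θ | a ∈ BRf uR μ.1 ↔ a ∈ S} := by
      ext μ; simp [E, Set.ext_iff]
    rw [this]
    refine MeasurableSet.iInter fun a => ?_
    by_cases ha : a ∈ S
    · simpa [ha] using hmem a
    · simp only [ha, iff_false]
      exact (hmem a).compl
  have hdisj : Pairwise (Function.onFun Disjoint E) := by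
    intro S T hST
    rw [Function.onFun, Set.disjoint_left]
    intro μ h1 h2
    exact hST (h1.symm.trans h2)
  have hcov : ⋃ S, E S = Set.univ := by
    ext μ; simp [E]
  have hcoordint : ∀ θ, Integrable (fun μ : Belief Θ => μ.1 θ) P := by
    intro θ
    refine Integrable.of_bound (C := 1) ?_ (Eventually.of_forall fun μ => ?_)
    · exact (hcoord θ).aestronglyMeasurable
    · rw [Real.norm_eq_abs, abs_of_nonneg (μ.2.1 θ), ← μ.2.2]
      exact Finset.single_le_sum (fun i _ => μ.2.1 i) (Finset.mem_univ θ)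
  have hwint : Integrable (fun μ : Belief Θ => wG uS uR μ.1) P := by
    refine Integrable.of_bound (C := KB uS) ?_ (Eventually.of_forall fun μ => ?_)
    · exact ((measurable_wG uS uR).comp measurable_subtype_coe).aestronglyMeasurable
    · exact abs_wG_le uS uR μ.1
  have hsplit : ∀ f : Belief Θ → ℝ, Integrable f P → ∫ μ, f μ ∂P = ∑ S, ∫ μ in E S, f μ ∂P := by
    intro f hf
    rw [← integral_iUnion_fintype hE hdisj fun S => hf.integrableOn, hcov, setIntegral_univ]
  let x : Set A → Θ → ℝ := fun S θ => ∫ μ in E S, μ.1 θ ∂P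
  let q : Set A → ℝ := fun S => P.real (E S)
  have hxsum : ∀ S, ∑ θ, x S θ = q S := by
    intro S
    simp only [x]
    rw [← integral_finsetSum _ fun θ _ => (hcoordint θ).integrableOn]
    have : ∀ μ : Belief Θ, ∑ θ, μ.1 θ = 1 := fun μ => μ.2.2
    simp only [this]
    simp [q]
  have hx0 : ∀ S θ, 0 ≤ x S θ := fun S θ => integral_nonneg fun μ => μ.2.1 θ
  have hlin : ∀ S (c : Θ → ℝ), ∑ θ, c θ * x S θ = ∫ μ in E S, (∑ θ, c θ * μ.1 θ) ∂P := by
    intro S c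
    rw [integral_finsetSum _ fun θ _ => ((hcoordint θ).const_mul (c θ)).integrableOn]
    refine Finset.sum_congr rfl fun θ _ => ?_
    rw [integral_const_mul]
  have hlinint : ∀ S (c : Θ → ℝ), IntegrableOn (fun μ : Belief Θ => ∑ θ, c θ * μ.1 θ) (E S) P :=
    fun S c => (integrable_finsetSum _ fun θ _ => (hcoordint θ).const_mul (c θ)).integrableOn
  have hBR : ∀ S, 0 < q S → BRf uR (x S) = S := by
    intro S hq
    have hsub : S ⊆ BRf uR (x S) := by
      intro a ha a'
      rw [hlin, hlin]
      refine setIntegral_mono_on (hlinint S _) (hlinint S _) (hE S) fun μ hμ => ?_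
      have : a ∈ BRf uR μ.1 := by rw [show BRf uR μ.1 = S from hμ]; exact ha
      exact this a'
    refine Set.Subset.antisymm ?_ hsub
    intro a ha
    by_contra hna
    have hES : (E S).Nonempty := by
      by_contra hne
      rw [Set.not_nonempty_iff_eq_empty] at hne
      simp [q, hne] at hq
    obtain ⟨μ1, hμ1⟩ := hES
    obtain ⟨a', ha'⟩ := BRf_nonempty uR μ1.1
    rw [show BRf uR μ1.1 = S from hμ1] at ha'
    have hle := ha a'
    have hle2 := hsub ha' a
    have heq : ∫ μ in E S, ((∑ θ, uR a' θ * μ.1 θ) - ∑ θ, uR a θ * μ.1 θ) ∂P = 0 := by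
      rw [integral_sub (hlinint S _) (hlinint S _), ← hlin, ← hlin]
      linarith
    have hpos : ∀ μ ∈ E S, 0 < (∑ θ, uR a' θ * μ.1 θ) - ∑ θ, uR a θ * μ.1 θ := by
      intro μ hμ
      have hμ' : BRf uR μ.1 = S := hμ
      have h1 : a' ∈ BRf uR μ.1 := hμ' ▸ ha'
      have h2 : a ∉ BRf uR μ.1 := hμ' ▸ hna
      by_contra hcon
      apply h2
      intro b
      have := h1 b
      linarith
    have := (setIntegral_pos_iff_support_of_nonneg_ae (μ := P) (s := E S)
      (f := fun μ : Belief Θ => (∑ θ, uR a' θ * μ.1 θ) - ∑ θ, uR a θ * μ.1 θ) ?_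
      ((hlinint S _).sub (hlinint S _))).mpr ?_
    · linarith
    · filter_upwards [ae_restrict_mem (hE S)] with μ hμ using (hpos μ hμ).le
    · have hs : (Function.support fun μ : Belief Θ =>
          (∑ θ, uR a' θ * μ.1 θ) - ∑ θ, uR a θ * μ.1 θ) ∩ E S = E S :=
        Set.inter_eq_right.mpr fun μ hμ => (hpos μ hμ).ne'
      rw [hs]
      exact (ENNReal.toReal_pos_iff.mp hq).1
  have hwS : ∀ S, ∫ μ in E S, wG uS uR μ.1 ∂P = q S * wG uS uR (x S) := by
    intro S
    rcases (measureReal_nonneg (μ := P) (s := E S)).eq_or_lt with h | h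
    · have h0 : P (E S) = 0 := by
        rw [eq_comm, measureReal_eq_zero_iff] at h; exact h
      change _ = P.real (E S) * _
      rw [← h, Measure.restrict_eq_zero.mpr h0]; simp
    · have : ∀ μ ∈ E S, wG uS uR μ.1 = wG uS uR (x S) := by
        intro μ hμ
        unfold wG
        rw [hBR S h, show BRf uR μ.1 = S from hμ]
      rw [setIntegral_congr_fun (hE S) this]
      simp [q]
  have hqsum : ∑ S, q S = 1 := by
    have := hsplit (fun _ => 1) (integrable_const 1)
    simp at this
    exact this.symm
  -- normalised points
  let z : Set A → (Θ → ℝ) × ℝ := fun S => ((fun θ => (q S)⁻¹ * x S θ), wG uS uR (x S))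
  have hz : ∑ S, q S • z S = (μ0, ∫ μ, wG uS uR (μ : Belief Θ).1 ∂P) := by
    ext θ
    · simp only [Prod.fst_sum, Prod.smul_fst, z, Finset.sum_apply, Pi.smul_apply, smul_eq_mul]
      rw [← hp θ, hsplit _ (hcoordint θ)]
      refine Finset.sum_congr rfl fun S _ => ?_
      change _ = x S θ
      rcases (measureReal_nonneg (μ := P) (s := E S)).eq_or_lt with h | h
      · have h' : q S = 0 := h.symm
        have := (Finset.sum_eq_zero_iff_of_nonneg (fun θ _ => hx0 S θ)).mp
          ((hxsum S).trans h') θ (Finset.mem_univ θ)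
        rw [this, h']; simp
      · have h' : q S ≠ 0 := h.ne'
        field_simp
    · simp only [Prod.snd_sum, Prod.smul_snd, z, smul_eq_mul]
      rw [hsplit _ hwint]
      exact Finset.sum_congr rfl fun S _ => (hwS S).symm
  rw [← hz, ← Finset.sum_filter_add_sum_filter_not Finset.univ (fun S => 0 < q S)]
  have hzero : ∀ S ∈ Finset.univ.filter (fun S => ¬ 0 < q S), q S = 0 := by
    intro S hS
    simp only [Finset.mem_filter, not_lt] at hS
    exact le_antisymm hS.2 measureReal_nonneg
  rw [Finset.sum_eq_zero (s := Finset.univ.filter (fun S => ¬ 0 < q S)) (fun S hS => by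
    rw [hzero S hS, zero_smul]), add_zero]
  rw [← Finset.sum_filter_add_sum_filter_not Finset.univ (fun S => 0 < q S),
    Finset.sum_eq_zero hzero, add_zero] at hqsum
  refine (convex_convexHull ℝ _).sum_mem (fun S _ => measureReal_nonneg) hqsum fun S hS => ?_
  apply subset_convexHull
  have hq : 0 < q S := (Finset.mem_filter.mp hS).2
  refine ⟨⟨fun θ => mul_nonneg (inv_nonneg.mpr hq.le) (hx0 S θ), ?_⟩, ?_⟩
  · simp only [z]
    rw [← Finset.mul_sum, hxsum, inv_mul_cancel₀ hq.ne']
  · simp only [z]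
    rw [wG_smul uS uR (x S) (inv_pos.mpr hq)]

/-- Every information policy is matched by an experiment with few messages. -/
theorem exists_experiment [Nonempty A] [Nonempty Θ] [Nonempty M]
    (hM : 2 * Fintype.card Θ ≤ Fintype.card M) (uS : A → ℝ) (uR : A → Θ → ℝ) (μ0 : Θ → ℝ)
    (hμ0 : μ0 ∈ stdSimplex ℝ Θ) {p : ProbabilityMeasure (Belief Θ)} (hp : p ∈ IPolF μ0) :
    ∃ ψ : Θ → M → ℝ, IsExperiment ψ ∧
      ∑ m, (∑ θ, μ0 θ * ψ θ m) * wG uS uR (fun θ => μ0 θ * ψ θ m) =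
        ∫ μ, wG uS uR (μ : Belief Θ).1 ∂(p : Measure (Belief Θ)) := by
  classical
  obtain ⟨ι, _, z, w, hz, haff, hw, hw1, hwz⟩ :=
    eq_pos_convex_span_of_mem_convexHull (mem_hull uS uR μ0 hp)
  have hzS : ∀ i, (z i).1 ∈ stdSimplex ℝ Θ ∧ (z i).2 = wG uS uR (z i).1 :=
    fun i => hz ⟨i, rfl⟩
  have hcard : Fintype.card ι ≤ Fintype.card M := by
    let φ : ((Θ → ℝ) × ℝ) →ₗ[ℝ] ℝ :=
      (∑ θ, LinearMap.proj θ : (Θ → ℝ) →ₗ[ℝ] ℝ).comp (LinearMap.fst ℝ (Θ → ℝ) ℝ)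
    have hφ : ∀ u, φ u = ∑ θ, u.1 θ := by intro u; simp [φ]
    have hle : vectorSpan ℝ (Set.range z) ≤ LinearMap.ker φ := by
      rw [vectorSpan_def, Submodule.span_le]
      rintro _ ⟨_, ⟨i, rfl⟩, _, ⟨j, rfl⟩, rfl⟩
      simp [hφ, (hzS i).1.2, (hzS j).1.2]
    have h1 := haff.card_le_finrank_succ
    have h2 := Submodule.finrank_mono hle
    have h3 := LinearMap.finrank_range_add_finrank_ker φ
    have h4 : Module.finrank ℝ (LinearMap.range φ) = 1 := by
      have : LinearMap.range φ = ⊤ := by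
        apply LinearMap.range_eq_top.mpr
        intro r
        refine ⟨(Pi.single (Classical.arbitrary Θ) r, 0), ?_⟩
        rw [hφ]; simp
      rw [this]; simp
    have h5 : Module.finrank ℝ ((Θ → ℝ) × ℝ) = Fintype.card Θ + 1 := by simp
    have h6 : 0 < Fintype.card Θ := Fintype.card_pos
    omega
  obtain ⟨e⟩ := Function.Embedding.nonempty_of_card_le hcard
  let X : M → Θ → ℝ := fun m θ => ∑ i, if e i = m then w i * (z i).1 θ else 0
  have hX0 : ∀ m θ, 0 ≤ X m θ := by
    intro m θ
    refine Finset.sum_nonneg fun i _ => ?_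
    split_ifs
    · exact mul_nonneg (hw i).le ((hzS i).1.1 θ)
    · exact le_rfl
  have hXe : ∀ i, X (e i) = fun θ => w i * (z i).1 θ := by
    intro i
    funext θ
    simp [X]
  have hXn : ∀ m, m ∉ Set.range e → X m = 0 := by
    intro m hm
    funext θ
    simp only [X]
    exact Finset.sum_eq_zero fun i _ => if_neg fun h => hm ⟨i, h⟩
  have hsumM : ∀ g : M → ℝ, (∀ m, m ∉ Set.range e → g m = 0) → ∑ m, g m = ∑ i, g (e i) := by
    intro g hg
    rw [← Finset.sum_map Finset.univ e g]
    symm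
    refine Finset.sum_subset (Finset.subset_univ _) fun m _ hm => hg m ?_
    simpa using hm
  have hXsum : ∀ θ, ∑ m, X m θ = μ0 θ := by
    intro θ
    rw [hsumM _ fun m hm => by rw [hXn m hm]; rfl]
    have := congrFun (congrArg Prod.fst hwz) θ
    simpa [hXe, Prod.fst_sum] using this
  let m0 : M := Classical.arbitrary M
  let ψ : Θ → M → ℝ := fun θ m => if μ0 θ = 0 then (if m = m0 then 1 else 0) else X m θ / μ0 θ
  have hψ : ∀ θ m, μ0 θ * ψ θ m = X m θ := by
    intro θ m
    by_cases h : μ0 θ = 0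
    · have := hXsum θ
      rw [h] at this
      rw [(Finset.sum_eq_zero_iff_of_nonneg (fun m _ => hX0 m θ)).mp this m (Finset.mem_univ m), h,
        zero_mul]
    · simp only [ψ, if_neg h]
      field_simp
  refine ⟨ψ, ?_, ?_⟩
  · intro θ
    by_cases h : μ0 θ = 0
    · constructor
      · intro m
        simp only [ψ, if_pos h]
        split_ifs <;> norm_num
      · simp [ψ, h]
    · constructor
      · intro m
        simp only [ψ, if_neg h]
        exact div_nonneg (hX0 m θ) (hμ0.1 θ)
      · simp only [ψ, if_neg h]
        rw [← Finset.sum_div, hXsum, div_self h]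
  · simp only [hψ]
    have := congrArg Prod.snd hwz
    simp only [Prod.snd_sum, Prod.smul_snd, smul_eq_mul] at this
    rw [← this, hsumM]
    · refine Finset.sum_congr rfl fun i _ => ?_
      have h1 : (fun θ => X (e i) θ) = fun θ => w i * (z i).1 θ := hXe i
      rw [h1, wG_smul uS uR _ (hw i), (hzS i).2]
      rw [← Finset.mul_sum, (hzS i).1.2, mul_one]
    · intro m hm
      simp [hXn m hm]

end measures


section continuation

variable {A Θ M : Type} [Fintype A] [Fintype Θ] [Fintype M]

/-- Sender value in a continuation profile. -/
noncomputable def cval (uS : A → ℝ) (μ0 : Θ → ℝ) (χ : ℝ) (ψ s : Θ → M → ℝ) (al : M → A → ℝ) : ℝ :=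
  ∑ θ, μ0 θ * ∑ m, (χ * ψ θ m + (1 - χ) * s θ m) * ∑ a, uS a * al m a

/-- Continuation equilibria after the experiment `ψ`. -/
def IsCE (uS : A → ℝ) (uR : A → Θ → ℝ) (μ0 : Θ → ℝ) (χ : ℝ)
    (ψ s : Θ → M → ℝ) (al : M → A → ℝ) (be : M → Θ → ℝ) : Prop :=
  (∀ θ, IsDist (s θ)) ∧ (∀ m, IsDist (al m)) ∧ (∀ m, IsDist (be m)) ∧
  (∀ (m : M) (a : A), al m a ≠ 0 → a ∈ BRf uR (be m)) ∧
  (∀ (m : M) (θ : Θ), be m θ * (∑ θ', μ0 θ' * (χ * ψ θ' m + (1 - χ) * s θ' m)) =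
      μ0 θ * (χ * ψ θ m + (1 - χ) * s θ m)) ∧
  (∀ (θ : Θ) (m : M), s θ m ≠ 0 → ∀ m' : M, ∑ a, uS a * al m' a ≤ ∑ a, uS a * al m a)

theorem cval_eq (uS : A → ℝ) (μ0 : Θ → ℝ) (χ : ℝ) (ψ s : Θ → M → ℝ) (al : M → A → ℝ) :
    cval uS μ0 χ ψ s al = χ * (∑ m, (∑ θ, μ0 θ * ψ θ m) * ∑ a, uS a * al m a) +
      (1 - χ) * (∑ m, (∑ θ, μ0 θ * s θ m) * ∑ a, uS a * al m a) := by
  unfold cval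
  simp only [Finset.mul_sum (s := (Finset.univ : Finset M)),
    Finset.sum_mul (s := (Finset.univ : Finset Θ))]
  rw [Finset.sum_comm, ← Finset.sum_add_distrib]
  refine Finset.sum_congr rfl fun m _ => ?_
  rw [Finset.mul_sum, Finset.mul_sum, ← Finset.sum_add_distrib]
  exact Finset.sum_congr rfl fun θ _ => by ring

theorem exists_cont [Nonempty A] [Nonempty M] (uS : A → ℝ) (uR : A → Θ → ℝ) (μ0 : Θ → ℝ)
    (hμ0 : μ0 ∈ stdSimplex ℝ Θ) {χ : ℝ} (hχ0 : 0 < χ) (hχ1 : χ < 1)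
    (ψ : Θ → M → ℝ) (hψ : IsExperiment ψ) :
    ∃ (s : Θ → M → ℝ) (al : M → A → ℝ) (be : M → Θ → ℝ), IsCE uS uR μ0 χ ψ s al be ∧
      cval uS μ0 χ ψ s al ≤
        wHatG uS uR μ0 + (1 - χ) * ((2 * Fintype.card M + 2) * KB uS) := by
  classical
  have h1χ : 0 < 1 - χ := by linarith
  let Y : M → ℝ → Θ → ℝ := fun m t θ => χ * (μ0 θ * ψ θ m) + t * ((1 - χ) * μ0 θ)
  let f : M → ℝ → ℝ := fun m t => wG uS uR (Y m t)
  have hYc : ∀ m, Continuous (Y m) := by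
    intro m
    refine continuous_pi fun θ => ?_
    simp only [Y]
    fun_prop
  have hBRloc : ∀ m t, ∀ᶠ u in 𝓝 t, BRf uR (Y m u) ⊆ BRf uR (Y m t) := fun m t =>
    (hYc m).continuousAt.eventually (BRf_eventually uR (Y m t))
  have hYsum : ∀ m t, ∑ θ, Y m t θ = χ * (∑ θ, μ0 θ * ψ θ m) + t * (1 - χ) := by
    intro m t
    simp only [Y, Finset.sum_add_distrib, ← Finset.mul_sum]
    rw [hμ0.2, mul_one]
  have hx0 : ∀ m θ, 0 ≤ μ0 θ * ψ θ m := fun m θ => mul_nonneg (hμ0.1 θ) ((hψ θ).1 m)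
  have hnx0 : ∀ m, 0 ≤ ∑ θ, μ0 θ * ψ θ m := fun m => Finset.sum_nonneg fun θ _ => hx0 m θ
  have hY0 : ∀ m t, 0 ≤ t → ∀ θ, 0 ≤ Y m t θ := by
    intro m t ht θ
    have h1 := hx0 m θ
    have h2 := hμ0.1 θ
    simp only [Y]
    positivity
  obtain ⟨t, ht, hpot⟩ := potential f (KB uS)
    (fun m => (measurable_wG uS uR).comp (hYc m).measurable)
    (fun m u => abs_wG_le uS uR _)
    (fun m u => (hBRloc m u).mono fun v hv => wG_anti uS uR hv)
  obtain ⟨m1, hm1⟩ := Finite.exists_max (fun m => f m (t m))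
  set S := f m1 (t m1) with hS
  have hτ : ∀ m, ∃ τ, 0 ≤ τ ∧ τ ≤ 1 ∧ (t m = 0 → τ = 0) ∧
      (0 < t m → S ≤ f m τ ∧ ∃ b ∈ BRf uR (Y m (t m)), S ≤ uS b) := by
    intro m
    rcases (ht.1 m).eq_or_lt with h | h
    · exact ⟨0, le_rfl, zero_le_one, fun _ => rfl, fun h' => absurd h h'.ne⟩
    · obtain ⟨δ, hδ, hδ'⟩ := Metric.eventually_nhds_iff.mp (hBRloc m (t m))
      obtain ⟨τ, h0, h1, h2, h3⟩ := hpot m h m1 δ hδ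
      refine ⟨τ, h0, h1, fun h' => absurd h' h.ne', fun _ => ⟨h3, ?_⟩⟩
      obtain ⟨b, hb, hb2⟩ := wG_attained uS uR (Y m τ)
      exact ⟨b, hδ' (by rwa [Real.dist_eq]) hb, by rw [hb2]; exact h3⟩
  choose τ hτ0 hτ1 hτz hτp using hτ
  let ny : M → ℝ := fun m => ∑ θ, Y m (t m) θ
  have hny0 : ∀ m, 0 ≤ ny m := fun m => Finset.sum_nonneg fun θ _ => hY0 m _ (ht.1 m) θ
  have hnypos : ∀ m, 0 < t m → 0 < ny m := by
    intro m hm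
    simp only [ny, hYsum]
    have := hnx0 m
    positivity
  have hpos : ∀ m, 0 < ny m → ∃ (α : A → ℝ) (β : Θ → ℝ), IsDist α ∧ IsDist β ∧
      (∀ a, α a ≠ 0 → a ∈ BRf uR β) ∧ (∀ θ, β θ * ny m = Y m (t m) θ) ∧
      (∑ a, uS a * α a ≤ S) ∧ (0 < t m → ∑ a, uS a * α a = S) ∧
      (t m = 0 → ∑ a, uS a * α a = f m 0) := by
    intro m hm
    have hbr : BRf uR (fun θ => (ny m)⁻¹ * Y m (t m) θ) = BRf uR (Y m (t m)) :=
      BRf_smul uR _ (inv_pos.mpr hm)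
    have hβ : IsDist (fun θ => (ny m)⁻¹ * Y m (t m) θ) :=
      ⟨fun θ => mul_nonneg (inv_nonneg.mpr hm.le) (hY0 m _ (ht.1 m) θ), by
        rw [← Finset.mul_sum]; exact inv_mul_cancel₀ hm.ne'⟩
    have hβ2 : ∀ θ, (ny m)⁻¹ * Y m (t m) θ * ny m = Y m (t m) θ := by
      intro θ
      field_simp
    obtain ⟨a, ha, ha2⟩ := wG_attained uS uR (Y m (t m))
    have ha3 : uS a = f m (t m) := ha2
    have hle : uS a ≤ S := ha3.trans_le (hm1 m)
    rcases (ht.1 m).eq_or_lt with h | h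
    · obtain ⟨α, h1, h2, h3⟩ := exists_mix uS uR _ ha ha (le_refl (uS a)) le_rfl
      refine ⟨α, _, h1, hβ, fun c hc => by rw [hbr]; exact h2 c hc, hβ2, h3.trans_le hle,
        fun h' => absurd h h'.ne, fun h' => ?_⟩
      rw [h3, ha3, h']
    · obtain ⟨_, b, hb, hb2⟩ := hτp m h
      obtain ⟨α, h1, h2, h3⟩ := exists_mix uS uR _ ha hb hle hb2
      exact ⟨α, _, h1, hβ, fun c hc => by rw [hbr]; exact h2 c hc, hβ2, h3.le,
        fun _ => h3, fun h' => absurd h' h.ne'⟩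
  obtain ⟨m0, hm0⟩ : ∃ m, 0 < t m := by
    by_contra hcon
    push Not at hcon
    have := Finset.sum_nonpos (s := Finset.univ) fun m _ => hcon m
    rw [ht.2] at this
    linarith
  have hall : ∀ m, ∃ (α : A → ℝ) (β : Θ → ℝ), IsDist α ∧ IsDist β ∧
      (∀ a, α a ≠ 0 → a ∈ BRf uR β) ∧ (∀ θ, β θ * ny m = Y m (t m) θ) ∧
      (∑ a, uS a * α a ≤ S) ∧ (0 < t m → ∑ a, uS a * α a = S) ∧
      (0 < ny m → t m = 0 → ∑ a, uS a * α a = f m 0) := by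
    intro m
    rcases (hny0 m).eq_or_lt with h | h
    · obtain ⟨α, β, h1, h2, h3, _, h5, _, _⟩ := hpos m0 (hnypos m0 hm0)
      refine ⟨α, β, h1, h2, h3, fun θ => ?_, h5, fun h' => absurd h (hnypos m h').ne,
        fun h' => absurd h h'.ne⟩
      rw [← h, mul_zero]
      exact ((Finset.sum_eq_zero_iff_of_nonneg (fun θ _ => hY0 m _ (ht.1 m) θ)).mp h.symm θ
        (Finset.mem_univ θ)).symm
    · obtain ⟨α, β, h1, h2, h3, h4, h5, h6, h7⟩ := hpos m h
      exact ⟨α, β, h1, h2, h3, h4, h5, h6, fun _ => h7⟩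
  choose α β hα hβ hsupp hbayes hUS hUt hU0 using hall
  have hYeq : ∀ m θ, μ0 θ * (χ * ψ θ m + (1 - χ) * t m) = Y m (t m) θ := by
    intro m θ
    simp only [Y]; ring
  refine ⟨fun _ => t, α, β, ⟨fun _ => ht, hα, hβ, hsupp, ?_, ?_⟩, ?_⟩
  · intro m θ
    simp only [hYeq]
    exact hbayes m θ
  · intro θ m hm m'
    rw [hUt m ((ht.1 m).lt_of_ne' hm)]
    exact hUS m'
  · rw [cval_eq]
    set K := KB uS
    set W := wHatG uS uR μ0
    have hW := abs_le.mp (wHat_abs uS uR μ0 hμ0)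
    have hKn : 0 ≤ K := KB_nonneg uS
    have b1 : ∑ m, (∑ θ, μ0 θ * ψ θ m) * ∑ a, uS a * α m a ≤
        ∑ m, (∑ θ, μ0 θ * ψ θ m) * f m (τ m) := by
      refine Finset.sum_le_sum fun m _ => ?_
      rcases (hnx0 m).eq_or_lt with h | h
      · rw [← h]; simp
      · refine mul_le_mul_of_nonneg_left ?_ h.le
        rcases (ht.1 m).eq_or_lt with h' | h'
        · have : 0 < ny m := by
            simp only [ny, hYsum]
            have := ht.1 m
            positivity
          rw [hU0 m this h'.symm, hτz m h'.symm]
        · rw [hUt m h']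
          exact (hτp m h').1
    have b2 : ∑ m, (∑ θ, μ0 θ * t m) * ∑ a, uS a * α m a ≤ K := by
      calc ∑ m, (∑ θ, μ0 θ * t m) * ∑ a, uS a * α m a ≤ ∑ m, t m * K := by
            refine Finset.sum_le_sum fun m _ => ?_
            rw [← Finset.sum_mul, hμ0.2, one_mul]
            exact mul_le_mul_of_nonneg_left (abs_le.mp (U_abs uS (hα m))).2 (ht.1 m)
        _ = K := by rw [← Finset.sum_mul, ht.2, one_mul]
    have hT0 : 0 ≤ ∑ m, τ m := Finset.sum_nonneg fun m _ => hτ0 m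
    have hTn : ∑ m, τ m ≤ Fintype.card M := by
      calc ∑ m, τ m ≤ ∑ _m : M, (1 : ℝ) := Finset.sum_le_sum fun m _ => hτ1 m
        _ = Fintype.card M := by simp
    have b3 := le_wHat uS uR μ0 hμ0 (fun m => Y m (τ m)) (fun m => hY0 m _ (hτ0 m))
      (κ := χ + (1 - χ) * ∑ m, τ m) (by positivity) (by
        intro θ
        simp only [Y, Finset.sum_add_distrib, ← Finset.mul_sum, ← Finset.sum_mul]
        rw [(hψ θ).2]
        ring)
    have b4 : ∑ m, (∑ θ, Y m (τ m) θ) * wG uS uR (Y m (τ m)) =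
        χ * (∑ m, (∑ θ, μ0 θ * ψ θ m) * f m (τ m)) + (1 - χ) * ∑ m, τ m * f m (τ m) := by
      rw [Finset.mul_sum, Finset.mul_sum, ← Finset.sum_add_distrib]
      refine Finset.sum_congr rfl fun m _ => ?_
      rw [hYsum]
      simp only [f]
      ring
    have b5 : -((∑ m, τ m) * K) ≤ ∑ m, τ m * f m (τ m) := by
      rw [Finset.sum_mul, ← Finset.sum_neg_distrib]
      refine Finset.sum_le_sum fun m _ => ?_
      have := mul_le_mul_of_nonneg_left (abs_le.mp (abs_wG_le uS uR (Y m (τ m)))).1 (hτ0 m)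
      change _ ≤ τ m * wG uS uR (Y m (τ m))
      linarith
    rw [b4] at b3
    set T := ∑ m, τ m
    have c1 := mul_le_mul_of_nonneg_left b1 hχ0.le
    have c2 := mul_le_mul_of_nonneg_left b2 h1χ.le
    have c5 := mul_le_mul_of_nonneg_left b5 h1χ.le
    have c6 : T * W ≤ T * K := mul_le_mul_of_nonneg_left hW.2 hT0
    have c7 : T * K ≤ Fintype.card M * K := mul_le_mul_of_nonneg_right hTn hKn
    have c8 := mul_le_mul_of_nonneg_left (c6.trans c7) h1χ.le
    have c9 := mul_le_mul_of_nonneg_left c7 h1χ.le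
    have c10 := mul_le_mul_of_nonneg_left hW.1 h1χ.le
    linarith

theorem ce_compact (uS : A → ℝ) (uR : A → Θ → ℝ) (μ0 : Θ → ℝ) (χ b : ℝ) :
    IsCompact {e : (Θ → M → ℝ) × (Θ → M → ℝ) × (M → A → ℝ) × (M → Θ → ℝ) |
      IsExperiment e.1 ∧ IsCE uS uR μ0 χ e.1 e.2.1 e.2.2.1 e.2.2.2 ∧
        cval uS μ0 χ e.1 e.2.1 e.2.2.1 ≤ b} := by
  have hc1 : IsCompact (Set.univ.pi fun _ : Θ => stdSimplex ℝ M) :=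
    isCompact_univ_pi fun _ => isCompact_stdSimplex ℝ M
  have hc2 : IsCompact (Set.univ.pi fun _ : M => stdSimplex ℝ A) :=
    isCompact_univ_pi fun _ => isCompact_stdSimplex ℝ A
  have hc3 : IsCompact (Set.univ.pi fun _ : M => stdSimplex ℝ Θ) :=
    isCompact_univ_pi fun _ => isCompact_stdSimplex ℝ Θ
  refine (hc1.prod (hc1.prod (hc2.prod hc3))).of_isClosed_subset ?_ ?_
  · have hψc : IsClosed {e : (Θ → M → ℝ) × (Θ → M → ℝ) × (M → A → ℝ) × (M → Θ → ℝ) |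
        e ∈ (Set.univ.pi fun _ : Θ => stdSimplex ℝ M) ×ˢ
          ((Set.univ.pi fun _ : Θ => stdSimplex ℝ M) ×ˢ
          ((Set.univ.pi fun _ : M => stdSimplex ℝ A) ×ˢ
            (Set.univ.pi fun _ : M => stdSimplex ℝ Θ)))} :=
      (hc1.prod (hc1.prod (hc2.prod hc3))).isClosed
    have h2 : IsClosed {e : (Θ → M → ℝ) × (Θ → M → ℝ) × (M → A → ℝ) × (M → Θ → ℝ) |
        ∀ (m : M) (a : A) (a' : A), e.2.2.1 m a = 0 ∨
          ∑ θ, uR a' θ * e.2.2.2 m θ ≤ ∑ θ, uR a θ * e.2.2.2 m θ} := by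
      simp only [Set.ofPred_forall, Set.ofPred_or]
      refine isClosed_iInter fun m => isClosed_iInter fun a => isClosed_iInter fun a' => ?_
      refine IsClosed.union (isClosed_eq ?_ ?_) (isClosed_le ?_ ?_) <;> fun_prop
    have h3 : IsClosed {e : (Θ → M → ℝ) × (Θ → M → ℝ) × (M → A → ℝ) × (M → Θ → ℝ) |
        ∀ (m : M) (θ : Θ),
          e.2.2.2 m θ * (∑ θ', μ0 θ' * (χ * e.1 θ' m + (1 - χ) * e.2.1 θ' m)) =
            μ0 θ * (χ * e.1 θ m + (1 - χ) * e.2.1 θ m)} := by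
      simp only [Set.ofPred_forall]
      exact isClosed_iInter fun m => isClosed_iInter fun θ =>
        isClosed_eq (by fun_prop) (by fun_prop)
    have h4 : IsClosed {e : (Θ → M → ℝ) × (Θ → M → ℝ) × (M → A → ℝ) × (M → Θ → ℝ) |
        ∀ (θ : Θ) (m : M) (m' : M), e.2.1 θ m = 0 ∨
          ∑ a, uS a * e.2.2.1 m' a ≤ ∑ a, uS a * e.2.2.1 m a} := by
      simp only [Set.ofPred_forall, Set.ofPred_or]
      refine isClosed_iInter fun m => isClosed_iInter fun a => isClosed_iInter fun a' => ?_
      refine IsClosed.union (isClosed_eq ?_ ?_) (isClosed_le ?_ ?_) <;> fun_prop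
    have h5 : IsClosed {e : (Θ → M → ℝ) × (Θ → M → ℝ) × (M → A → ℝ) × (M → Θ → ℝ) |
        cval uS μ0 χ e.1 e.2.1 e.2.2.1 ≤ b} := by
      unfold cval
      exact isClosed_le (by fun_prop) (by fun_prop)
    convert hψc.inter (h2.inter (h3.inter (h4.inter h5))) using 1
    ext e
    simp only [IsExperiment, IsCE, IsDist, BRf, stdSimplex, Set.mem_inter_iff, Set.mem_ofPred_eq,
      Set.mem_prod, Set.mem_pi, Set.mem_univ, true_implies, or_iff_not_imp_left, ne_eq]
    constructor
    · rintro ⟨h1, ⟨h2, h3, h4, h5, h6, h7⟩, h8⟩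
      exact ⟨⟨h1, h2, h3, h4⟩, fun m a a' h => h5 m a h a', h6, fun θ m m' h => h7 θ m h m', h8⟩
    · rintro ⟨⟨h1, h2, h3, h4⟩, h5, h6, h7, h8⟩
      exact ⟨h1, ⟨h2, h3, h4, fun m a h a' => h5 m a a' h, h6, fun θ m h m' => h7 θ m m' h⟩, h8⟩
  · rintro ⟨ψ, s, al, be⟩ ⟨h1, ⟨h2, h3, h4, _⟩, _⟩
    exact ⟨fun θ _ => h1 θ, fun θ _ => h2 θ, fun m _ => h3 m, fun m _ => h4 m⟩

theorem exists_pbe [Nonempty A] [Nonempty M] (uS : A → ℝ) (uR : A → Θ → ℝ) (μ0 : Θ → ℝ)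
    (hμ0 : μ0 ∈ stdSimplex ℝ Θ) {χ : ℝ} (hχ0 : 0 < χ) (hχ1 : χ < 1) :
    ∃ r ∈ chiPBEPayoffs A M uS uR μ0 χ,
      r ≤ wHatG uS uR μ0 + (1 - χ) * ((2 * Fintype.card M + 2) * KB uS) := by
  classical
  set b := wHatG uS uR μ0 + (1 - χ) * ((2 * Fintype.card M + 2) * KB uS)
  have hex := fun (ψ : Θ → M → ℝ) (hψ : IsExperiment ψ) =>
    exists_cont uS uR μ0 hμ0 hχ0 hχ1 ψ hψ
  have hψ0 : IsExperiment fun (_ : Θ) (m : M) =>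
      if m = Classical.arbitrary M then (1 : ℝ) else 0 := by
    intro θ
    exact ⟨fun m => by dsimp only; split_ifs <;> norm_num, by simp⟩
  obtain ⟨s0, al0, be0, h0⟩ := hex _ hψ0
  have hcont : Continuous fun e : (Θ → M → ℝ) × (Θ → M → ℝ) × (M → A → ℝ) × (M → Θ → ℝ) =>
      cval uS μ0 χ e.1 e.2.1 e.2.2.1 := by
    unfold cval; fun_prop
  obtain ⟨⟨ψ, s, al, be⟩, ⟨hψ, hce, hb⟩, hmax⟩ :=
    (ce_compact uS uR μ0 χ b).exists_isMaxOn ⟨(_, s0, al0, be0), hψ0, h0⟩ hcont.continuousOn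
  have hsel : ∀ ψ' : Θ → M → ℝ, ∃ (s' : Θ → M → ℝ) (al' : M → A → ℝ) (be' : M → Θ → ℝ),
      (IsExperiment ψ' → IsCE uS uR μ0 χ ψ' s' al' be' ∧
        cval uS μ0 χ ψ' s' al' ≤ cval uS μ0 χ ψ s al) ∧
      (ψ' = ψ → s' = s ∧ al' = al ∧ be' = be) := by
    intro ψ'
    by_cases h : ψ' = ψ
    · subst h
      exact ⟨s, al, be, fun _ => ⟨hce, le_rfl⟩, fun _ => ⟨rfl, rfl, rfl⟩⟩
    by_cases hE : IsExperiment ψ'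
    · obtain ⟨s', al', be', h1, h2⟩ := hex ψ' hE
      exact ⟨s', al', be', fun _ => ⟨h1, hmax (a := (ψ', s', al', be')) ⟨hE, h1, h2⟩⟩,
        fun h' => absurd h' h⟩
    · exact ⟨s, al, be, fun h' => absurd h' hE, fun h' => absurd h' h⟩
  choose σ α β h1 h2 using hsel
  have hval : ∀ ψ', chiValue uS μ0 χ (fun θ ψ' => σ ψ' θ) (fun m ψ' => α ψ' m) ψ' =
      cval uS μ0 χ ψ' (σ ψ') (α ψ') := fun _ => rfl
  have hvψ : cval uS μ0 χ ψ (σ ψ) (α ψ) = cval uS μ0 χ ψ s al := by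
    rw [(h2 ψ rfl).1, (h2 ψ rfl).2.1]
  refine ⟨cval uS μ0 χ ψ s al, ⟨ψ, fun θ ψ' => σ ψ' θ, fun m ψ' => α ψ' m, fun m ψ' => β ψ' m,
    ⟨hψ, ?_, ?_, ?_, ?_, ?_, ?_, ?_⟩, ?_⟩, hb⟩
  · exact fun ψ' h => (h1 ψ' h).1.1
  · exact fun ψ' h => (h1 ψ' h).1.2.1
  · exact fun ψ' h => (h1 ψ' h).1.2.2.1
  · intro ψ' h
    rw [hval, hval, hvψ]
    exact (h1 ψ' h).2
  · exact fun ψ' h => (h1 ψ' h).1.2.2.2.1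
  · exact fun ψ' h => (h1 ψ' h).1.2.2.2.2.1
  · exact fun ψ' h => (h1 ψ' h).1.2.2.2.2.2
  · rw [hval, hvψ]

/-- Lower bound on the value of a fixed experiment in any continuation equilibrium. -/
theorem lower_bound [Nonempty A] (uS : A → ℝ) (uR : A → Θ → ℝ) (μ0 : Θ → ℝ)
    (hμ0 : μ0 ∈ stdSimplex ℝ Θ) (ψ : Θ → M → ℝ) (hψ : IsExperiment ψ) :
    ∃ δ > 0, ∀ χ : ℝ, 0 < χ → χ < 1 → 1 - χ < δ → ∀ s al be, IsCE uS uR μ0 χ ψ s al be →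
      χ * (∑ m, (∑ θ, μ0 θ * ψ θ m) * wG uS uR (fun θ => μ0 θ * ψ θ m)) - (1 - χ) * KB uS ≤
        cval uS μ0 χ ψ s al := by
  have hloc : ∀ m, ∃ δ > 0, ∀ y : Θ → ℝ, dist y (fun θ => μ0 θ * ψ θ m) < δ →
      BRf uR y ⊆ BRf uR (fun θ => μ0 θ * ψ θ m) := by
    intro m
    obtain ⟨δ, hδ, h⟩ := Metric.eventually_nhds_iff.mp (BRf_eventually uR fun θ => μ0 θ * ψ θ m)
    exact ⟨δ, hδ, fun y hy => h hy⟩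
  choose δ hδ hBR using hloc
  have hμ1 : ∀ θ, μ0 θ ≤ 1 := fun θ => by
    rw [← hμ0.2]; exact Finset.single_le_sum (fun i _ => hμ0.1 i) (Finset.mem_univ θ)
  obtain ⟨δ', hδ', hmin⟩ : ∃ δ' > 0, ∀ m, δ' ≤ δ m := by
    rcases isEmpty_or_nonempty M with hM | hM
    · exact ⟨1, one_pos, fun m => hM.elim m⟩
    · obtain ⟨m, hm⟩ := Finite.exists_min δ
      exact ⟨δ m, hδ m, hm⟩
  refine ⟨δ', hδ', ?_⟩
  intro χ hχ0 hχ1 hχδ s al be ⟨hs, hal, hbe, h2, h3, _⟩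
  have h1χ : 0 < 1 - χ := by linarith
  have dle : ∀ {f : M → ℝ}, IsDist f → ∀ m, f m ≤ 1 := fun {f} hf m => by
    rw [← hf.2]; exact Finset.single_le_sum (fun i _ => hf.1 i) (Finset.mem_univ m)
  rw [cval_eq]
  have hU : ∀ m, (∑ θ, μ0 θ * ψ θ m) * wG uS uR (fun θ => μ0 θ * ψ θ m) ≤
      (∑ θ, μ0 θ * ψ θ m) * ∑ a, uS a * al m a := by
    intro m
    have hnx0 : 0 ≤ ∑ θ, μ0 θ * ψ θ m :=
      Finset.sum_nonneg fun θ _ => mul_nonneg (hμ0.1 θ) ((hψ θ).1 m)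
    rcases hnx0.eq_or_lt with h | h
    · rw [← h]; simp
    refine mul_le_mul_of_nonneg_left ?_ h.le
    refine U_ge uS uR _ (hal m) fun a ha => ?_
    have hbr := h2 m a ha
    set n := ∑ θ', μ0 θ' * (χ * ψ θ' m + (1 - χ) * s θ' m) with hn
    have hnpos : 0 < n := by
      have : χ * ∑ θ, μ0 θ * ψ θ m ≤ n := by
        rw [hn, Finset.mul_sum]
        refine Finset.sum_le_sum fun θ _ => ?_
        have := mul_nonneg h1χ.le (mul_nonneg (hμ0.1 θ) ((hs θ).1 m))
        linarith
      exact (mul_pos hχ0 h).trans_le this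
    rw [← BRf_smul uR (be m) hnpos] at hbr
    refine hBR m _ ?_ hbr
    refine lt_of_le_of_lt ?_ (hχδ.trans_le (hmin m))
    rw [dist_pi_le_iff h1χ.le]
    intro θ
    rw [mul_comm, h3 m θ, Real.dist_eq]
    have e : μ0 θ * (χ * ψ θ m + (1 - χ) * s θ m) - μ0 θ * ψ θ m =
        (1 - χ) * (μ0 θ * (s θ m - ψ θ m)) := by ring
    rw [e, abs_mul, abs_of_pos h1χ, abs_mul, abs_of_nonneg (hμ0.1 θ)]
    have habs : |s θ m - ψ θ m| ≤ 1 := by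
      rw [abs_le]
      constructor <;> linarith [(hs θ).1 m, (hψ θ).1 m, dle (hs θ) m, dle (hψ θ) m]
    calc (1 - χ) * (μ0 θ * |s θ m - ψ θ m|) ≤ (1 - χ) * 1 := by
          refine mul_le_mul_of_nonneg_left ?_ h1χ.le
          exact mul_le_one₀ (hμ1 θ) (abs_nonneg _) habs
      _ = 1 - χ := mul_one _
  have b1 := mul_le_mul_of_nonneg_left (Finset.sum_le_sum fun m (_ : m ∈ Finset.univ) => hU m) hχ0.le
  have b2 : -KB uS ≤ ∑ m, (∑ θ, μ0 θ * s θ m) * ∑ a, uS a * al m a := by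
    have : ∑ m, (∑ θ, μ0 θ * s θ m) = 1 := by
      rw [Finset.sum_comm]
      simp only [← Finset.mul_sum, (hs _).2, mul_one]
      exact hμ0.2
    calc -KB uS = ∑ m, (∑ θ, μ0 θ * s θ m) * (-KB uS) := by
          rw [← Finset.sum_mul, this, one_mul]
      _ ≤ _ := by
        refine Finset.sum_le_sum fun m _ => mul_le_mul_of_nonneg_left ?_
          (Finset.sum_nonneg fun θ _ => mul_nonneg (hμ0.1 θ) ((hs θ).1 m))
        exact (abs_le.mp (U_abs uS (hal m))).1
  have b3 := mul_le_mul_of_nonneg_left b2 h1χ.le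
  linarith

theorem pbe_ge (uS : A → ℝ) (uR : A → Θ → ℝ) (μ0 : Θ → ℝ) {χ : ℝ} {c : ℝ}
    (ψ : Θ → M → ℝ) (hψ : IsExperiment ψ)
    (hc : ∀ s al be, IsCE uS uR μ0 χ ψ s al be → c ≤ cval uS μ0 χ ψ s al) :
    ∀ r ∈ chiPBEPayoffs A M uS uR μ0 χ, c ≤ r := by
  rintro _ ⟨ψ', σ, α, β, ⟨_, h1, h2, h3, h4, h5, h6, h7⟩, rfl⟩
  refine le_trans ?_ (h4 ψ hψ)
  exact hc (fun θ => σ θ ψ) (fun m => α m ψ) (fun m => β m ψ)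
    ⟨h1 ψ hψ, h2 ψ hψ, h3 ψ hψ, h5 ψ hψ, h6 ψ hψ, h7 ψ hψ⟩

theorem wStar_limit [Nonempty A] [Nonempty Θ] [Nonempty M]
    (hM : 2 * Fintype.card Θ ≤ Fintype.card M)
    (uS : A → ℝ) (uR : A → Θ → ℝ) (μ0 : Θ → ℝ) (hμ0 : μ0 ∈ stdSimplex ℝ Θ) :
    Tendsto (fun χ : ℝ => wStar A M uS uR μ0 χ)
      (nhdsWithin 1 (Set.Ico (0 : ℝ) 1)) (nhds (wHatG uS uR μ0)) := by
  rw [Metric.tendsto_nhds]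
  intro ε hε
  -- a nearly optimal experiment
  obtain ⟨_, ⟨p, hp, rfl⟩, hpε⟩ := exists_lt_of_lt_csSup
    ((IPolF_nonempty μ0 hμ0).image _) (show wHatG uS uR μ0 - ε / 2 < _ from sub_lt_self _ (half_pos hε))
  obtain ⟨ψ, hψ, hV⟩ := exists_experiment (M := M) hM uS uR μ0 hμ0 hp
  obtain ⟨δ, hδ, hlow⟩ := lower_bound uS uR μ0 hμ0 ψ hψ
  dsimp only at hpε
  rw [← hV] at hpε
  set V := ∑ m, (∑ θ, μ0 θ * ψ θ m) * wG uS uR (fun θ => μ0 θ * ψ θ m)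
  set W := wHatG uS uR μ0
  set K := KB uS
  have hK : 0 ≤ K := KB_nonneg uS
  have hVle : V ≤ K := by
    rw [hV]; exact (abs_le.mp (integral_wG_abs uS uR p)).2
  have ev1 : ∀ᶠ χ : ℝ in nhdsWithin 1 (Set.Ico (0 : ℝ) 1), 0 < χ :=
    nhdsWithin_le_nhds (lt_mem_nhds one_pos)
  have ev2 : ∀ᶠ χ : ℝ in nhdsWithin 1 (Set.Ico (0 : ℝ) 1), 1 - χ < δ :=
    nhdsWithin_le_nhds ((lt_mem_nhds (show 1 - δ < 1 by linarith)).mono fun χ h => by linarith)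
  have ev3 : ∀ᶠ χ : ℝ in nhdsWithin 1 (Set.Ico (0 : ℝ) 1),
      (1 - χ) * ((2 * Fintype.card M + 2) * K) < ε / 2 := by
    apply nhdsWithin_le_nhds
    have hc : Continuous fun χ : ℝ => (1 - χ) * ((2 * Fintype.card M + 2) * K) := by fun_prop
    exact hc.continuousAt.eventually (gt_mem_nhds (by simpa using half_pos hε))
  filter_upwards [ev1, ev2, ev3, self_mem_nhdsWithin] with χ h0 h1 h2 h3
  have hχ1 : χ < 1 := h3.2
  have hge := pbe_ge uS uR μ0 ψ hψ (hlow χ h0 hχ1 h1)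
  obtain ⟨r, hr, hrle⟩ := exists_pbe (M := M) uS uR μ0 hμ0 h0 hχ1
  have hup : wStar A M uS uR μ0 χ ≤ r := csInf_le ⟨_, hge⟩ hr
  have hlo : χ * V - (1 - χ) * K ≤ wStar A M uS uR μ0 χ := le_csInf ⟨r, hr⟩ hge
  have hn : (0 : ℝ) ≤ Fintype.card M := Nat.cast_nonneg _
  have h4 : 0 < 1 - χ := by linarith
  have h5 : (1 - χ) * V ≤ (1 - χ) * K := mul_le_mul_of_nonneg_left hVle h4.le
  have h6 : 0 ≤ (1 - χ) * (2 * Fintype.card M * K) := by positivity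
  rw [Real.dist_eq, abs_lt]
  constructor <;> linarith

end continuation

/-- **Strong robustness.** The infimum sender `χ`-PBE payoff converges to `ŵ(μ0)` as
credibility `χ` tends to `1` from below. In particular, it converges to the Bayesian
persuasion value `v̂(μ0)` if and only if `ŵ(μ0) = v̂(μ0)`. -/
theorem wStar_tendsto_wHat
    (A Θ M : Type) [Fintype A] [Fintype Θ] [Fintype M]
    [Nonempty A] [Nonempty Θ] [Nonempty M]
    (hM : 2 * Fintype.card Θ ≤ Fintype.card M)
    (uS : A → ℝ) (uR : A → Θ → ℝ) (μ0 : Θ → ℝ) (hμ0 : μ0 ∈ stdSimplex ℝ Θ) :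
    Tendsto (fun χ : ℝ => wStar A M uS uR μ0 χ)
      (nhdsWithin 1 (Set.Ico (0 : ℝ) 1)) (nhds (wHatG uS uR μ0)) ∧
    (Tendsto (fun χ : ℝ => wStar A M uS uR μ0 χ)
        (nhdsWithin 1 (Set.Ico (0 : ℝ) 1)) (nhds (vHatG uS uR μ0)) ↔
      wHatG uS uR μ0 = vHatG uS uR μ0) := by
  have h := wStar_limit (A := A) (M := M) hM uS uR μ0 hμ0
  refine ⟨h, fun h' => ?_, fun he => he ▸ h⟩
  have hne : (nhdsWithin (1 : ℝ) (Set.Ico (0 : ℝ) 1)).NeBot :=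
    mem_closure_iff_nhdsWithin_neBot.mp (by
      rw [closure_Ico zero_ne_one]; exact ⟨zero_le_one, le_rfl⟩)
  exact tendsto_nhds_unique h h'
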